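/- (Puncturing preserves feasibility) Let d ≥ 2 and let A be a feasible solution of the (n,d) Delsarte LP with Krawtchouk decomposition b, i.e., b_j = (1/C(n,j)) Σ_{i=0}^{n} A_i K_j(i;n). Define the punctured quasicode A^P by A^P_i = (C(n−1,i)/2^{n−1}) Σ_{j=0}^{n−1} b_j K_j(i;n−1) for 0 ≤ i ≤ n−1. Then A^P is a feasible solution of the (n−1,d−1) Delsarte LP, and has the same objective value Σ_i A^P_i = Σ_i A_i. -/

import Mathlib

/-!
For `0 ≤ i ≤ n`, the Krawtchouk value `K_j(i; n)` is the coefficient of `X ^ j` in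
`krawGen n i = (1 - X) ^ i * (1 + X) ^ (n - i)`. Everything needed is read off this generating
polynomial:

* `2 K_j(i; n) = K_j(i; n + 1) + K_j(i + 1; n + 1)`, because `(1 + X) + (1 - X) = 2`;
* `∑ j, K_j(i; n) K_l(j; n) = 2 ^ n δ_{il}`, by homogenizing `krawGen n i` and substituting
  `(1 - X, 1 + X)` for the two variables, which gives `(2 X) ^ i * 2 ^ (n - i)`;
* `C(n, i) K_j(i; n) = C(n, j) K_i(j; n)`, a trinomial identity in each summand.

Reciprocity and orthogonality together invert `b ↦ A` (`kraw_inversion`). Applied at length `n`,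
inversion and the first identity give
`A^P_i = C(n - 1, i) * (A_i / C(n, i) + A_{i+1} / C(n, i + 1))`,
whence nonnegativity, the normalization and the vanishing range. Applied at length `n - 1`, it says
`∑ i, A^P_i K_j(i; n - 1) = C(n - 1, j) b_j`, so the Delsarte inequalities follow from `b_j ≥ 0`,
and the case `j = 0` shows that the objective value is `b_0 = ∑ i, A_i`.
-/


open Finset

/-- Integer binomial coefficient with convention C(a,b)=0 unless 0 ≤ b ≤ a. -/
def intChoose (a b : ℤ) : ℤ :=
  if 0 ≤ a ∧ 0 ≤ b then (a.toNat.choose b.toNat : ℤ) else 0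

/-- Krawtchouk polynomial K_j(i;n) = Σ_{k=0}^{j} (-1)^k C(i,k) C(n-i,j-k),
with the convention K_j(i;n)=0 if j ∉ [0,n] or i ∉ [0,n]. -/
def kraw (n : ℕ) (j i : ℤ) : ℤ :=
  ∑ k ∈ Finset.range (j.toNat + 1),
    (-1) ^ k * intChoose i k * intChoose ((n : ℤ) - i) (j - k)

/-- Feasibility for the (n,d) Delsarte linear program: A_0 = 1, A_i = 0 for
1 ≤ i ≤ d-1, A_i ≥ 0 for i ≤ n, and the Delsarte inequalities
Σ_{i=0}^{n} A_i K_j(i;n) ≥ 0 for all 1 ≤ j ≤ n. -/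
def delsarteFeasible (n d : ℕ) (A : ℕ → ℚ) : Prop :=
  A 0 = 1 ∧ (∀ i : ℕ, 1 ≤ i → i ≤ d - 1 → A i = 0) ∧
    (∀ i : ℕ, i ≤ n → 0 ≤ A i) ∧
    ∀ j : ℕ, 1 ≤ j → j ≤ n →
      0 ≤ ∑ i ∈ Finset.range (n + 1), A i * (kraw n j i : ℚ)

open Polynomial in
/-- The generating polynomial `∑ j, K_j(i; n) X ^ j = (1 - X) ^ i * (1 + X) ^ (n - i)`,
meaningful for `i ≤ n`. -/
noncomputable def krawGen (n i : ℕ) : ℚ[X] := (1 - X) ^ i * (1 + X) ^ (n - i)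

lemma intChoose_natCast (a b : ℕ) : intChoose a b = (a.choose b : ℤ) := by
  simp [intChoose]

lemma kraw_eq_sum (n j i : ℕ) (hi : i ≤ n) :
    (kraw n j i : ℚ) =
      ∑ k ∈ range (j + 1), (-1) ^ k * (i.choose k : ℚ) * ((n - i).choose (j - k) : ℚ) := by
  unfold kraw
  push_cast
  simp only [Int.toNat_natCast]
  refine sum_congr rfl fun k hk => ?_
  have hk' : k ≤ j := by simpa [Nat.lt_succ_iff] using hk
  have h1 : ((n : ℤ) - i) = ((n - i : ℕ) : ℤ) := by omega
  have h2 : ((j : ℤ) - k) = ((j - k : ℕ) : ℤ) := by omega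
  rw [h1, h2, intChoose_natCast, intChoose_natCast]
  norm_cast

open Polynomial in
lemma coeff_one_sub_X_pow' (i k : ℕ) :
    ((1 - X : ℚ[X]) ^ i).coeff k = (-1) ^ k * (i.choose k : ℚ) := by
  have h : (1 - X : ℚ[X]) ^ i = ((1 + X : ℚ[X]) ^ i).comp (C (-1) * X) := by
    simp [sub_eq_add_neg]
  rw [h, comp_C_mul_X_coeff, coeff_one_add_X_pow, mul_comm]

lemma kraw_eq_coeff (n j i : ℕ) (hi : i ≤ n) :
    (kraw n j i : ℚ) = (krawGen n i).coeff j := by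
  rw [kraw_eq_sum n j i hi, krawGen, Polynomial.coeff_mul,
    Finset.Nat.sum_antidiagonal_eq_sum_range_succ_mk]
  simp only [coeff_one_sub_X_pow', Polynomial.coeff_one_add_X_pow]

lemma two_mul_kraw (n j i : ℕ) (hi : i ≤ n) :
    2 * (kraw n j i : ℚ) = kraw (n + 1) j i + kraw (n + 1) j (i + 1 : ℕ) := by
  rw [kraw_eq_coeff n j i hi, kraw_eq_coeff (n + 1) j i (by omega),
    kraw_eq_coeff (n + 1) j (i + 1) (by omega), ← Polynomial.coeff_add]
  have h : krawGen (n + 1) i + krawGen (n + 1) (i + 1) = Polynomial.C 2 * krawGen n i := by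
    unfold krawGen
    rw [show n + 1 - i = (n - i) + 1 by omega, show n + 1 - (i + 1) = n - i by omega]
    rw [show (Polynomial.C 2 : Polynomial ℚ) = 2 from rfl]
    ring
  rw [h, Polynomial.coeff_C_mul]

lemma natDegree_krawGen_le (n i : ℕ) (hi : i ≤ n) : (krawGen n i).natDegree ≤ n := by
  unfold krawGen
  have h1 : (1 - Polynomial.X : Polynomial ℚ).natDegree ≤ 1 := by compute_degree
  have h2 : (1 + Polynomial.X : Polynomial ℚ).natDegree ≤ 1 := by compute_degree
  have h := Polynomial.natDegree_mul_le_of_le (Polynomial.natDegree_pow_le_of_le i h1)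
    (Polynomial.natDegree_pow_le_of_le (n - i) h2)
  omega

lemma kraw_eq_zero (n j i : ℕ) (hi : i ≤ n) (hj : n < j) : (kraw n j i : ℚ) = 0 := by
  rw [kraw_eq_coeff n j i hi]
  exact Polynomial.coeff_eq_zero_of_natDegree_lt ((natDegree_krawGen_le n i hi).trans_lt hj)

open Polynomial in
/-- The degree-`n` homogenization of `p` evaluated at `(u, v)`; equal to `v ^ n * p (u / v)`
when `p` has degree at most `n` and `v` is invertible. -/
noncomputable def homEval (u v : ℚ[X]) (n : ℕ) (p : ℚ[X]) : ℚ[X] :=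
  ∑ j ∈ range (n + 1), C (p.coeff j) * (u ^ j * v ^ (n - j))

open Polynomial in
lemma homEval_linear_mul (u v : ℚ[X]) (n : ℕ) (p : ℚ[X]) (hp : p.natDegree ≤ n) (c : ℚ) :
    homEval u v (n + 1) ((1 + C c * X) * p) = (v + C c * u) * homEval u v n p := by
  have h0 : ∀ j, ((1 + C c * X) * p).coeff j = p.coeff j + c * (X * p).coeff j := by
    intro j
    rw [add_mul, one_mul, coeff_add, mul_assoc, coeff_C_mul]
  have h1 : ∑ j ∈ range (n + 2), C (p.coeff j) * (u ^ j * v ^ (n + 1 - j))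
      = v * homEval u v n p := by
    rw [sum_range_succ, coeff_eq_zero_of_natDegree_lt (by omega : p.natDegree < n + 1), homEval,
      mul_sum]
    simp only [map_zero, zero_mul, add_zero]
    refine sum_congr rfl fun j hj => ?_
    have : j ≤ n := by simpa [Nat.lt_succ_iff] using hj
    rw [show n + 1 - j = (n - j) + 1 by omega]
    ring
  have h2 : ∑ j ∈ range (n + 2), C ((X * p).coeff j) * (u ^ j * v ^ (n + 1 - j))
      = u * homEval u v n p := by
    rw [sum_range_succ', homEval, mul_sum]
    simp only [coeff_X_mul, coeff_X_mul_zero, map_zero, zero_mul, add_zero]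
    refine sum_congr rfl fun j hj => ?_
    rw [show n + 1 - (j + 1) = n - j by omega]
    ring
  rw [show (v + C c * u) * homEval u v n p = v * homEval u v n p + C c * (u * homEval u v n p) by
    ring, ← h1, ← h2, homEval, mul_sum, ← sum_add_distrib]
  refine sum_congr rfl fun j _ => ?_
  rw [h0, C_add, C_mul]
  ring

open Polynomial in
lemma homEval_krawGen (u v : ℚ[X]) (n i : ℕ) (hi : i ≤ n) :
    homEval u v n (krawGen n i) = (v - u) ^ i * (v + u) ^ (n - i) := by
  induction n generalizing i with
  | zero =>
    obtain rfl : i = 0 := by omega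
    simp [homEval, krawGen]
  | succ n ih =>
    rcases Nat.lt_or_ge n i with h | h
    · obtain rfl : i = n + 1 := by omega
      have e : krawGen (n + 1) (n + 1) = (1 + C (-1) * X) * krawGen n n := by
        simp only [krawGen, Nat.sub_self, map_neg, map_one]
        ring
      rw [e, homEval_linear_mul u v n _ (natDegree_krawGen_le n n le_rfl), ih n le_rfl]
      simp only [Nat.sub_self, map_neg, map_one]
      ring
    · have e : krawGen (n + 1) i = (1 + C 1 * X) * krawGen n i := by
        simp only [krawGen, map_one, show n + 1 - i = (n - i) + 1 by omega]
        ring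
      rw [e, homEval_linear_mul u v n _ (natDegree_krawGen_le n i h), ih i h,
        show n + 1 - i = (n - i) + 1 by omega, map_one]
      ring

/-- The Krawtchouk matrix squares to `2 ^ n` times the identity. -/
lemma kraw_orthogonality (n i l : ℕ) (hi : i ≤ n) :
    ∑ j ∈ range (n + 1), (kraw n j i : ℚ) * (kraw n l j : ℚ) = if l = i then 2 ^ n else 0 := by
  have h := congrArg (fun p => Polynomial.coeff p l)
    (homEval_krawGen (1 - Polynomial.X) (1 + Polynomial.X) n i hi)
  have e : (1 + Polynomial.X - (1 - Polynomial.X) : Polynomial ℚ) ^ i *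
      (1 + Polynomial.X + (1 - Polynomial.X)) ^ (n - i)
      = Polynomial.C (2 ^ n) * Polynomial.X ^ i := by
    rw [show (1 + Polynomial.X - (1 - Polynomial.X) : Polynomial ℚ) = 2 * Polynomial.X by ring,
      show (1 + Polynomial.X + (1 - Polynomial.X) : Polynomial ℚ) = 2 by ring, Polynomial.C_pow,
      show (Polynomial.C 2 : Polynomial ℚ) = 2 from rfl, mul_pow]
    obtain ⟨k, rfl⟩ := Nat.exists_eq_add_of_le hi
    rw [Nat.add_sub_cancel_left]
    ring
  simp only [e, homEval, Polynomial.finsetSum_coeff, Polynomial.coeff_C_mul,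
    Polynomial.coeff_X_pow, mul_ite, mul_one, mul_zero] at h
  rw [← h]
  refine sum_congr rfl fun j hj => ?_
  have hj' : j ≤ n := by simpa [Nat.lt_succ_iff] using hj
  rw [kraw_eq_coeff n j i hi, kraw_eq_coeff n l j hj', ← krawGen]

/-- Both sides count the ways to choose sets of sizes `i` and `j` in an `n`-set that meet in
`k` points. -/
lemma choose_trinomial_symm (n i j k : ℕ) (hki : k ≤ i) (hkj : k ≤ j) (hi : i ≤ n) (hj : j ≤ n) :
    n.choose i * (i.choose k * (n - i).choose (j - k)) =
      n.choose j * (j.choose k * (n - j).choose (i - k)) := by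
  rw [← mul_assoc, ← mul_assoc, Nat.choose_mul hki, Nat.choose_mul hkj, mul_assoc, mul_assoc]
  congr 1
  obtain ⟨a, rfl⟩ := Nat.exists_eq_add_of_le hki
  obtain ⟨c, rfl⟩ := Nat.exists_eq_add_of_le hkj
  obtain ⟨m, rfl⟩ := Nat.exists_eq_add_of_le (hki.trans hi)
  simp only [Nat.add_sub_cancel_left, Nat.add_sub_add_left]
  rcases Nat.lt_or_ge m (a + c) with h | h
  · rw [Nat.choose_eq_zero_of_lt (by omega : m - a < c),
      Nat.choose_eq_zero_of_lt (by omega : m - c < a)]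
    simp
  · have h1 := Nat.choose_mul (n := m) (k := a + c) (s := a) (by omega)
    have h2 := Nat.choose_mul (n := m) (k := a + c) (s := c) (by omega)
    rw [Nat.add_sub_cancel_left] at h1
    rw [Nat.add_sub_cancel] at h2
    rw [← h1, ← h2, Nat.choose_symm_add]

lemma kraw_reciprocity (n i j : ℕ) (hi : i ≤ n) (hj : j ≤ n) :
    (n.choose i : ℚ) * kraw n j i = n.choose j * kraw n i j := by
  -- Terms with `k > i` vanish, so both sums can be taken over `k ≤ n`.
  have ext : ∀ a c : ℕ, a ≤ n → c ≤ n → (n.choose a : ℚ) * kraw n c a =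
      ∑ k ∈ range (n + 1), if k ≤ a ∧ k ≤ c then
        (-1) ^ k * ((n.choose a * (a.choose k * (n - a).choose (c - k)) : ℕ) : ℚ) else 0 := by
    intro a c ha hc
    rw [kraw_eq_sum n c a ha, mul_sum]
    have hsub : range (c + 1) ⊆ range (n + 1) := range_subset_range.2 (by omega)
    rw [← sum_subset hsub]
    · refine sum_congr rfl fun k hk => ?_
      have hkc : k ≤ c := by simpa [Nat.lt_succ_iff] using hk
      by_cases hka : k ≤ a
      · rw [if_pos ⟨hka, hkc⟩]
        push_cast
        ring
      · rw [if_neg (by tauto), Nat.choose_eq_zero_of_lt (by omega : a < k)]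
        simp
    · intro k _ hk
      rw [if_neg]
      simp at hk
      omega
  rw [ext i j hi hj, ext j i hj hi]
  refine sum_congr rfl fun k _ => ?_
  by_cases h : k ≤ i ∧ k ≤ j
  · rw [if_pos h, if_pos h.symm, choose_trinomial_symm n i j k h.1 h.2 hi hj]
  · rw [if_neg h, if_neg (by tauto)]

/-- The transform `b ↦ (C(n, i) / 2 ^ n * ∑ j, b_j K_j(i; n))_i` followed by the Krawtchouk
transform gives back `C(n, l) b_l`. -/
lemma kraw_inversion (n l : ℕ) (hl : l ≤ n) (b : ℕ → ℚ) :
    ∑ i ∈ range (n + 1), ((n.choose i : ℚ) * ∑ j ∈ range (n + 1), b j * kraw n j i) * kraw n l i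
      = 2 ^ n * (n.choose l * b l) := by
  have hle : ∀ {i : ℕ}, i ∈ range (n + 1) → i ≤ n := fun h => by
    simpa [Nat.lt_succ_iff] using h
  calc _ = ∑ i ∈ range (n + 1), ∑ j ∈ range (n + 1),
        b j * n.choose j * ((kraw n i j : ℚ) * kraw n l i) := by
        refine sum_congr rfl fun i hi => ?_
        rw [mul_sum, sum_mul]
        refine sum_congr rfl fun j hj => ?_
        linear_combination b j * kraw n l i * kraw_reciprocity n i j (hle hi) (hle hj)
    _ = ∑ j ∈ range (n + 1), b j * n.choose j * (if l = j then 2 ^ n else 0) := by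
        rw [sum_comm]
        refine sum_congr rfl fun j hj => ?_
        rw [← mul_sum, kraw_orthogonality n j l (hle hj)]
    _ = _ := by
        simp only [mul_ite, mul_zero]
        rw [sum_ite_eq, if_pos (by simpa [Nat.lt_succ_iff] using hl)]
        ring

/-- A quasicode is recovered from its Krawtchouk decomposition. -/
lemma kraw_inversion_dual (n l : ℕ) (hl : l ≤ n) (A b : ℕ → ℚ)
    (hb : ∀ j ≤ n, (n.choose j : ℚ) * b j = ∑ i ∈ range (n + 1), A i * kraw n j i) :
    (n.choose l : ℚ) * ∑ j ∈ range (n + 1), b j * kraw n j l = 2 ^ n * A l := by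
  have hle : ∀ {i : ℕ}, i ∈ range (n + 1) → i ≤ n := fun h => by
    simpa [Nat.lt_succ_iff] using h
  calc _ = ∑ j ∈ range (n + 1), ∑ i ∈ range (n + 1), A i * ((kraw n j i : ℚ) * kraw n l j) := by
        rw [mul_sum]
        refine sum_congr rfl fun j hj => ?_
        have h : ∑ i ∈ range (n + 1), A i * ((kraw n j i : ℚ) * kraw n l j)
            = (n.choose j * b j) * kraw n l j := by
          rw [hb j (hle hj), sum_mul]
          exact sum_congr rfl fun i _ => by ring
        rw [h]
        linear_combination b j * kraw_reciprocity n l j hl (hle hj)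
    _ = ∑ i ∈ range (n + 1), A i * (if l = i then 2 ^ n else 0) := by
        rw [sum_comm]
        refine sum_congr rfl fun i hi => ?_
        rw [← mul_sum, kraw_orthogonality n i l (hle hi)]
    _ = _ := by
        simp only [mul_ite, mul_zero]
        rw [sum_ite_eq, if_pos (by simpa [Nat.lt_succ_iff] using hl)]
        ring

lemma kraw_zero_left (n i : ℕ) (hi : i ≤ n) : (kraw n 0 i : ℚ) = 1 := by
  simpa using kraw_eq_sum n 0 i hi

/-- Puncturing preserves feasibility: let d ≥ 2 and A be feasible for the (n,d)
Delsarte LP, with Krawtchouk decomposition b_j = (1/C(n,j)) Σ_i A_i K_j(i;n).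
The punctured quasicode A^P_i = (C(n-1,i)/2^{n-1}) Σ_{j=0}^{n-1} b_j K_j(i;n-1)
is feasible for the (n-1,d-1) Delsarte LP, with the same objective value. -/
theorem puncturing_preserves_feasibility (n d : ℕ) (hd : 2 ≤ d) (hdn : d ≤ n)
    (A b AP : ℕ → ℚ) (hA : delsarteFeasible n d A)
    (hb : ∀ j : ℕ, j ≤ n →
      b j = (1 / (n.choose j : ℚ)) * ∑ i ∈ Finset.range (n + 1), A i * (kraw n j i : ℚ))
    (hAP : ∀ i : ℕ, i ≤ n - 1 →
      AP i = ((n - 1).choose i : ℚ) / 2 ^ (n - 1) *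
        ∑ j ∈ Finset.range n, b j * (kraw (n - 1) j i : ℚ)) :
    delsarteFeasible (n - 1) (d - 1) AP ∧
      ∑ i ∈ Finset.range n, AP i = ∑ i ∈ Finset.range (n + 1), A i := by
  obtain ⟨m, rfl⟩ : ∃ m, n = m + 1 := ⟨n - 1, by omega⟩
  obtain ⟨hA0, hAz, hAnn, hAd⟩ := hA
  simp only [Nat.add_sub_cancel] at hAP ⊢
  have hchoose : ∀ k j : ℕ, j ≤ k → (0 : ℚ) < k.choose j := fun k j h => by
    exact_mod_cast Nat.choose_pos h
  have hCb : ∀ j ≤ m + 1, ((m + 1).choose j : ℚ) * b j =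
      ∑ i ∈ range (m + 1 + 1), A i * kraw (m + 1) j i := by
    intro j hj
    have := (hchoose (m + 1) j hj).ne'
    rw [hb j hj]
    field_simp
  have hform : ∀ i ≤ m, AP i = m.choose i *
      (A i / (m + 1).choose i + A (i + 1) / (m + 1).choose (i + 1)) := by
    intro i hi
    have e1 := kraw_inversion_dual (m + 1) i (by omega) A b hCb
    have e2 := kraw_inversion_dual (m + 1) (i + 1) (by omega) A b hCb
    -- The `j = m + 1` term may be added since `K_{m+1}(i; m) = 0`.
    have e3 : 2 * ∑ j ∈ range (m + 1), b j * (kraw m j i : ℚ) =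
        ∑ j ∈ range (m + 1 + 1), b j * (kraw (m + 1) j i : ℚ) +
          ∑ j ∈ range (m + 1 + 1), b j * (kraw (m + 1) j (i + 1 : ℕ) : ℚ) := by
      have e4 : ∑ j ∈ range (m + 1), b j * (kraw m j i : ℚ) =
          ∑ j ∈ range (m + 1 + 1), b j * (kraw m j i : ℚ) := by
        rw [sum_range_succ _ (m + 1), kraw_eq_zero m (m + 1) i hi (by omega)]
        simp
      rw [e4, mul_sum, ← sum_add_distrib]
      refine sum_congr rfl fun j _ => ?_
      linear_combination b j * two_mul_kraw m j i hi
    have c1 := (hchoose (m + 1) i (by omega)).ne'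
    have c2 := (hchoose (m + 1) (i + 1) (by omega)).ne'
    rw [mul_comm, ← eq_div_iff c1] at e1
    rw [mul_comm, ← eq_div_iff c2] at e2
    rw [e1, e2] at e3
    rw [hAP i hi, show ∑ j ∈ range (m + 1), b j * (kraw m j i : ℚ) =
      (2 ^ (m + 1) * A i / (m + 1).choose i +
        2 ^ (m + 1) * A (i + 1) / (m + 1).choose (i + 1)) / 2 by linarith]
    field_simp
    ring
  have hdual : ∀ l ≤ m, ∑ i ∈ range (m + 1), AP i * (kraw m l i : ℚ) = m.choose l * b l := by
    intro l hl
    have h := kraw_inversion m l hl b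
    have h2 : (2 : ℚ) ^ m ≠ 0 := by positivity
    refine mul_left_cancel₀ h2 ?_
    rw [← h, mul_sum]
    refine sum_congr rfl fun i hi => ?_
    rw [hAP i (by simpa [Nat.lt_succ_iff] using hi)]
    field_simp
  refine ⟨⟨?_, ?_, ?_, ?_⟩, ?_⟩
  · rw [hform 0 (by omega), hA0, hAz 1 le_rfl (by omega)]
    simp
  · intro i h1 h2
    rw [hform i (by omega), hAz i h1 (by omega), hAz (i + 1) (by omega) (by omega)]
    simp
  · intro i hi
    rw [hform i hi]
    have := hAnn i (by omega)
    have := hAnn (i + 1) (by omega)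
    positivity
  · intro j h1 h2
    rw [hdual j h2]
    have h3 : 0 ≤ b j := by
      rw [hb j (by omega)]
      exact mul_nonneg (by positivity) (hAd j h1 (by omega))
    positivity
  · have e1 := hdual 0 (by omega)
    have e2 := hCb 0 (by omega)
    simp only [Nat.choose_zero_right, Nat.cast_one, one_mul] at e1 e2
    have e3 : ∀ k (F : ℕ → ℚ), ∑ i ∈ range (k + 1), F i * (kraw k (0 : ℕ) i : ℚ) =
        ∑ i ∈ range (k + 1), F i := fun k F => sum_congr rfl fun i hi => by
      have h := kraw_zero_left k i (by simpa [Nat.lt_succ_iff] using hi)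
      rw [Nat.cast_zero, h, mul_one]
    rw [e3] at e1 e2
    rw [e1, e2]
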